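/- Let L be a Lie algebra over a field K. If the universal enveloping algebra U(L) is a principal ideal ring, then L is abelian, i.e. the derived subalgebra [L,L] is zero. -/

import Mathlib

/-!
The argument shows that `L` has dimension at most one, by comparing degrees in `U(L)`.

Fix a totally ordered basis `b : I → L` and let `P = MvPolynomial I K`. The Poincaré–Birkhoff–Witt
theorem is proved in the following form. There is an action of `L` on `P` (`rep`, `repLie`) for
which `b i` acts as multiplication by `X i` up to terms that do not raise the degree
(`rep_sub_mem`), and exactly as multiplication by `X i` on monomials all of whose variables have
index at least `i` (`rep_of_le`). On other monomials the action is forced by moving the smallest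
variable `X j` to the front: `b i * b j = b j * b i + ⁅b i, b j⁆`, which is a recursion on the degree.
That this is an action of the Lie algebra (`rep_lie_low`) is an induction on the degree using the
Jacobi identity. Let `ord : P → U(L)` send a monomial to the corresponding nondecreasing product of
basis vectors. It is surjective, since permuting the letters of a word changes it by shorter words
(`ord_surjective`), and `u ↦ u • 1` is a left inverse (`repU_ord_one`). Moreover
`ord p • f = p * f` modulo terms of degree less than `deg p + deg f` (`repU_ord_sub_mem`), so the
degree transported to `U(L)` along `ord` is additive.

Now suppose that the augmentation ideal, the kernel of `U(L) → K`, is generated by `ord r`. Each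
basis vector is `b i = ord p * ord r`, and it has degree one, so `deg p + deg r ≤ 1`. If `deg r = 0`
then `ord r` is a scalar killed by the augmentation, hence zero, which is impossible. So `p` is a
scalar, and all `X i` are scalar multiples of the same `r`. Hence `I` has at most one element.
-/

open MvPolynomial

namespace PBW

/-- Polynomials of total degree strictly less than `n`; in particular `lowDeg 0 = ⊥`. -/
noncomputable def lowDeg (K I : Type*) [Field K] (n : ℕ) : Submodule K (MvPolynomial I K) :=
  Submodule.span K ((fun m => monomial m (1 : K)) '' {m : I →₀ ℕ | m.degree < n})

/-! ### Polynomials of bounded degree -/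

section LowDeg

variable {K I : Type*} [Field K]

theorem mem_lowDeg_iff {n : ℕ} {f : MvPolynomial I K} :
    f ∈ lowDeg K I n ↔ ∀ m : I →₀ ℕ, n ≤ m.degree → coeff m f = 0 := by
  classical
  constructor
  · intro hf m hm
    induction hf using Submodule.span_induction with
    | mem x hx =>
      obtain ⟨p, hp, rfl⟩ := hx
      have : p ≠ m := by rintro rfl; exact absurd hp (not_lt.2 hm)
      simp [coeff_monomial, this]
    | zero => simp
    | add x y _ _ hx hy => simp [hx, hy]
    | smul a x _ hx => simp [hx]
  · intro h
    rw [f.as_sum]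
    refine Submodule.sum_mem _ fun m hm => ?_
    rw [← mul_one (coeff m f), ← smul_eq_mul, ← smul_monomial]
    refine Submodule.smul_mem _ _ (Submodule.subset_span ⟨m, ?_, rfl⟩)
    by_contra hlt
    exact (mem_support_iff.1 hm) (h m (not_lt.1 hlt))

theorem lowDeg_mono {n k : ℕ} (h : n ≤ k) : lowDeg K I n ≤ lowDeg K I k :=
  fun _ hf => mem_lowDeg_iff.2 fun m hm => mem_lowDeg_iff.1 hf m (h.trans hm)

theorem monomial_mem_lowDeg {m : I →₀ ℕ} {n : ℕ} (h : m.degree < n) :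
    monomial m (1 : K) ∈ lowDeg K I n :=
  Submodule.subset_span ⟨m, h, rfl⟩

theorem X_mul_monomial (i : I) (m : I →₀ ℕ) :
    X i * monomial m (1 : K) = monomial (Finsupp.single i 1 + m) 1 := by
  rw [X, monomial_mul, one_mul]

/-- To check where a linear map sends polynomials of degree less than `n`, monomials suffice. -/
theorem map_mem_of_lowDeg {M : Type*} [AddCommGroup M] [Module K M] {n : ℕ}
    (T : MvPolynomial I K →ₗ[K] M) (S : Submodule K M)
    (h : ∀ m : I →₀ ℕ, m.degree < n → T (monomial m 1) ∈ S)
    {f : MvPolynomial I K} (hf : f ∈ lowDeg K I n) : T f ∈ S := by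
  have : lowDeg K I n ≤ S.comap T := by
    refine Submodule.span_le.2 ?_
    rintro _ ⟨m, hm, rfl⟩
    exact h m hm
  exact this hf

theorem X_mul_mem_lowDeg (i : I) {n : ℕ} {f : MvPolynomial I K} (hf : f ∈ lowDeg K I n) :
    X i * f ∈ lowDeg K I (n + 1) := by
  refine map_mem_of_lowDeg (LinearMap.mulLeft K (X i)) _ (fun m hm => ?_) hf
  rw [LinearMap.mulLeft_apply, X_mul_monomial]
  refine monomial_mem_lowDeg ?_
  rw [map_add, Finsupp.degree_single]; omega

theorem mem_lowDeg_totalDegree (f : MvPolynomial I K) :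
    f ∈ lowDeg K I (f.totalDegree + 1) := by
  refine mem_lowDeg_iff.2 fun m hm => ?_
  refine coeff_eq_zero_of_totalDegree_lt ?_
  rw [← Finsupp.degree_apply]; omega

theorem totalDegree_lt_of_mem_lowDeg {n : ℕ} {f : MvPolynomial I K}
    (hf : f ∈ lowDeg K I (n + 1)) : f.totalDegree < n + 1 := by
  rw [Nat.lt_succ_iff]
  refine Finset.sup_le fun m hm => ?_
  by_contra h
  refine (mem_support_iff.1 hm) (mem_lowDeg_iff.1 hf m ?_)
  rw [Finsupp.degree_apply]
  simp only [Finsupp.sum] at h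
  omega

theorem degree_sub_single_lt {m : I →₀ ℕ} {j : I} (hj : j ∈ m.support) :
    (m - Finsupp.single j 1).degree + 1 = m.degree := by
  have h : Finsupp.single j 1 ≤ m := by
    rw [Finsupp.single_le_iff]; exact Nat.one_le_iff_ne_zero.2 (Finsupp.mem_support_iff.1 hj)
  conv_rhs => rw [← tsub_add_cancel_of_le h]
  rw [map_add, Finsupp.degree_single]

theorem length_toMultiset (m : I →₀ ℕ) : (Finsupp.toMultiset m).card = m.degree := by
  rw [Finsupp.card_toMultiset, Finsupp.degree_apply]; rfl

end LowDeg

/-! ### The action of `L` on polynomials -/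

section Action

variable {K L I : Type*} [Field K] [LieRing L] [LieAlgebra K L] [LinearOrder I]
  (b : Module.Basis I K L)

open Classical in
/-- The action of the basis vector `b i` on the monomial `z_m` with exponent vector `m`. If some
variable of `z_m` has index below `i`, let `j` be the least index occurring and `z_m = X j * z_n`.
Then `b i • z_m` has to be `b j • (b i • z_n) + ⁅b i, b j⁆ • z_n`. Writing `b i • z_n = X i * z_n + w`
with `w` of degree at most that of `z_n`, and `b j • (X i * z_n) = X i * z_m`, this becomes the
formula below, which only refers to the action on monomials of degree less than that of `z_m`. The
test `p.degree < m.degree` holds for every monomial of `w` (`act_sub_mem`) and is there to make the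
recursion visibly well-founded. -/
noncomputable def act (i : I) (m : I →₀ ℕ) : MvPolynomial I K :=
  if h : ∃ j, (j ∈ m.support ∧ ∀ k ∈ m.support, j ≤ k) ∧ j < i then
    X i * monomial m 1 +
      (∑ p ∈ (act i (m - Finsupp.single h.choose 1) -
          X i * monomial (m - Finsupp.single h.choose 1) 1).support,
        if hp : p.degree < m.degree then
          coeff p (act i (m - Finsupp.single h.choose 1) -
            X i * monomial (m - Finsupp.single h.choose 1) 1) • act h.choose p
        else 0) +
      ∑ k ∈ (b.repr ⁅b i, b h.choose⁆).support,
        b.repr ⁅b i, b h.choose⁆ k • act k (m - Finsupp.single h.choose 1)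
  else X i * monomial m 1
termination_by m.degree
decreasing_by
  all_goals first
    | exact hp
    | (have := degree_sub_single_lt h.choose_spec.1.1; omega)

theorem act_of_le {i : I} {m : I →₀ ℕ} (h : ∀ k ∈ m.support, i ≤ k) :
    act b i m = X i * monomial m 1 := by
  rw [act, dif_neg]
  rintro ⟨j, ⟨hj, -⟩, hji⟩
  exact absurd (h j hj) (not_le.2 hji)

theorem act_of_lt {i j : I} {m : I →₀ ℕ} (hj : j ∈ m.support) (hmin : ∀ k ∈ m.support, j ≤ k)
    (hji : j < i) :
    act b i m = X i * monomial m 1 +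
      (∑ p ∈ (act b i (m - Finsupp.single j 1) -
          X i * monomial (m - Finsupp.single j 1) 1).support,
        if p.degree < m.degree then
          coeff p (act b i (m - Finsupp.single j 1) -
            X i * monomial (m - Finsupp.single j 1) 1) • act b j p
        else 0) +
      ∑ k ∈ (b.repr ⁅b i, b j⁆).support,
        b.repr ⁅b i, b j⁆ k • act b k (m - Finsupp.single j 1) := by
  have h : ∃ j, (j ∈ m.support ∧ ∀ k ∈ m.support, j ≤ k) ∧ j < i := ⟨j, ⟨hj, hmin⟩, hji⟩
  have hc : h.choose = j :=
    le_antisymm (h.choose_spec.1.2 j hj) (hmin _ h.choose_spec.1.1)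
  rw [act, dif_pos h, hc]
  rfl

theorem exists_min {m : I →₀ ℕ} {i : I} (h : ¬ ∀ k ∈ m.support, i ≤ k) :
    ∃ j, j ∈ m.support ∧ (∀ k ∈ m.support, j ≤ k) ∧ j < i := by
  push Not at h
  obtain ⟨k, hk, hki⟩ := h
  refine ⟨m.support.min' ⟨k, hk⟩, Finset.min'_mem _ _, fun l hl => Finset.min'_le _ _ hl,
    (Finset.min'_le _ _ hk).trans_lt hki⟩

/-- The action of `b i` is multiplication by `X i` up to terms that do not raise the degree. -/
theorem act_sub_mem (i : I) (m : I →₀ ℕ) :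
    act b i m - X i * monomial m 1 ∈ lowDeg K I (m.degree + 1) := by
  induction hd : m.degree using Nat.strong_induction_on generalizing i m with
  | _ d ih =>
  subst hd
  have hact : ∀ k (p : I →₀ ℕ), p.degree < m.degree → act b k p ∈ lowDeg K I (m.degree + 1) := by
    intro k p hp
    rw [← sub_add_cancel (act b k p) (X k * monomial p 1)]
    refine Submodule.add_mem _ (lowDeg_mono (by omega) (ih _ hp k p rfl)) ?_
    exact lowDeg_mono (by omega) (X_mul_mem_lowDeg k (monomial_mem_lowDeg (Nat.lt_succ_self _)))
  by_cases h : ∀ k ∈ m.support, i ≤ k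
  · rw [act_of_le b h, sub_self]; exact Submodule.zero_mem _
  · obtain ⟨j, hj, hmin, hji⟩ := exists_min h
    have hdeg := degree_sub_single_lt hj
    rw [act_of_lt b hj hmin hji, add_assoc, add_sub_cancel_left]
    refine Submodule.add_mem _ (Submodule.sum_mem _ fun p _ => ?_)
      (Submodule.sum_mem _ fun k _ => Submodule.smul_mem _ _ (hact _ _ (by omega)))
    split_ifs with hp
    · exact Submodule.smul_mem _ _ (hact _ _ hp)
    · exact Submodule.zero_mem _

/-- The bilinear extension of `act` to a linear map from `L` to the endomorphisms of the polynomial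
ring; it respects brackets by `rep_lie_low`. -/
noncomputable def rep : L →ₗ[K] Module.End K (MvPolynomial I K) :=
  b.constr K fun i => (basisMonomials I K).constr K (act b i)

theorem rep_monomial (i : I) (m : I →₀ ℕ) : rep b (b i) (monomial m 1) = act b i m := by
  have h : monomial m (1 : K) = basisMonomials I K m := by rw [coe_basisMonomials]
  rw [rep, Module.Basis.constr_basis, h, Module.Basis.constr_basis]

theorem rep_of_le {i : I} {m : I →₀ ℕ} (h : ∀ k ∈ m.support, i ≤ k) :
    rep b (b i) (monomial m 1) = monomial (Finsupp.single i 1 + m) 1 := by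
  rw [rep_monomial, act_of_le b h, X_mul_monomial]

theorem rep_sub_mem (i : I) {n : ℕ} {f : MvPolynomial I K} (hf : f ∈ lowDeg K I n) :
    rep b (b i) f - X i * f ∈ lowDeg K I n := by
  refine map_mem_of_lowDeg (rep b (b i) - LinearMap.mulLeft K (X i)) _ (fun m hm => ?_) hf
  rw [LinearMap.sub_apply, rep_monomial, LinearMap.mulLeft_apply]
  exact lowDeg_mono hm (act_sub_mem b i m)

/-- The commutation relation that the recursive clause of `act` is designed to enforce. -/
theorem rep_swap {i j : I} {m : I →₀ ℕ} (h : ∀ k ∈ m.support, j ≤ k) (hji : j < i) :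
    rep b (b i) (rep b (b j) (monomial m 1)) =
      rep b (b j) (rep b (b i) (monomial m 1)) + rep b ⁅b i, b j⁆ (monomial m 1) := by
  have hmin : ∀ k ∈ (Finsupp.single j 1 + m).support, j ≤ k := by
    intro k hk
    rcases Finset.mem_union.1 (Finsupp.support_add hk) with hk | hk
    · exact (Finset.mem_singleton.1 (Finsupp.support_single_subset hk)).ge
    · exact h k hk
  have hmem : j ∈ (Finsupp.single j 1 + m).support := by simp
  have hd : (Finsupp.single j 1 + m).degree = m.degree + 1 := by
    rw [map_add, Finsupp.degree_single, add_comm]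
  have hlie : rep b ⁅b i, b j⁆ (monomial m 1) =
      ∑ k ∈ (b.repr ⁅b i, b j⁆).support, b.repr ⁅b i, b j⁆ k • act b k m := by
    conv_lhs => rw [← b.linearCombination_repr ⁅b i, b j⁆]
    rw [Finsupp.linearCombination_apply, Finsupp.sum, map_sum, LinearMap.sum_apply]
    refine Finset.sum_congr rfl fun k _ => ?_
    rw [map_smul, LinearMap.smul_apply, rep_monomial]
  rw [rep_of_le b h, rep_monomial, act_of_lt b hmem hmin hji, add_tsub_cancel_left, hlie]
  congr 1
  have hlow := act_sub_mem b i m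
  set w := act b i m - X i * monomial m 1 with hw
  have hi : rep b (b i) (monomial m 1) = X i * monomial m 1 + w := by
    rw [rep_monomial, hw]; abel
  have hmin' : ∀ k ∈ (Finsupp.single i 1 + m).support, j ≤ k := by
    intro k hk
    rcases Finset.mem_union.1 (Finsupp.support_add hk) with hk | hk
    · exact (Finset.mem_singleton.1 (Finsupp.support_single_subset hk)).ge.trans' hji.le
    · exact h k hk
  rw [hi, hd, LinearMap.map_add, X_mul_monomial, X_mul_monomial, rep_of_le b hmin', add_left_comm]
  congr 1
  conv_rhs => rw [w.as_sum]
  rw [map_sum]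
  refine Finset.sum_congr rfl fun p hp => ?_
  have hp' : p.degree < m.degree + 1 := by
    by_contra hlt
    exact (mem_support_iff.1 hp) (mem_lowDeg_iff.1 hlow p (not_lt.1 hlt))
  rw [if_pos (by omega)]
  conv_rhs => rw [← mul_one (coeff p w), ← smul_eq_mul, ← smul_monomial]
  rw [map_smul, rep_monomial]

/-- By bilinearity and antisymmetry, the commutation relation on a given polynomial need only be
checked for pairs of basis vectors in decreasing order. -/
theorem rep_lie_of_basis {f : MvPolynomial I K}
    (h : ∀ i j, j < i → rep b ⁅b i, b j⁆ f =
      rep b (b i) (rep b (b j) f) - rep b (b j) (rep b (b i) f)) (x y : L) :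
    rep b ⁅x, y⁆ f = rep b x (rep b y f) - rep b y (rep b x f) := by
  let B₁ : L →ₗ[K] L →ₗ[K] MvPolynomial I K := LinearMap.mk₂ K (fun x y => rep b ⁅x, y⁆ f)
    (by simp) (by simp) (by simp) (by simp)
  let B₂ : L →ₗ[K] L →ₗ[K] MvPolynomial I K :=
    LinearMap.mk₂ K (fun x y => rep b x (rep b y f) - rep b y (rep b x f))
    (by intros; simp; abel) (by intros; simp [smul_sub]) (by intros; simp; abel)
    (by intros; simp [smul_sub])
  have hB : B₁ = B₂ := by
    refine b.ext fun i => b.ext fun j => ?_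
    change rep b ⁅b i, b j⁆ f = rep b (b i) (rep b (b j) f) - rep b (b j) (rep b (b i) f)
    rcases lt_trichotomy j i with hij | rfl | hij
    · exact h i j hij
    · simp
    · rw [← lie_skew, map_neg, LinearMap.neg_apply, h j i hij, neg_sub]
  exact LinearMap.congr_fun (LinearMap.congr_fun hB x) y

/-- `rep` respects brackets. In the inductive step, for `b i`, `b j` with `j < i` acting on a
monomial whose least index `v` is below `j`, write the monomial as `b v • z_q`, move `b v` to the
front using `rep_swap` and the induction hypothesis, and conclude with the Jacobi identity for
`b i`, `b j`, `b v`. -/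
theorem rep_lie_low (n : ℕ) : ∀ f ∈ lowDeg K I n, ∀ x y : L,
    rep b ⁅x, y⁆ f = rep b x (rep b y f) - rep b y (rep b x f) := by
  induction n with
  | zero =>
    intro f hf x y
    have : f = 0 := by ext m; simpa using mem_lowDeg_iff.1 hf m (Nat.zero_le _)
    simp [this]
  | succ n ih =>
    have key : ∀ (m : I →₀ ℕ), m.degree < n + 1 → ∀ x y : L,
        rep b ⁅x, y⁆ (monomial m 1) =
          rep b x (rep b y (monomial m 1)) - rep b y (rep b x (monomial m 1)) := by
      intro m hm
      refine rep_lie_of_basis b fun i j hji => ?_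
      by_cases h : ∀ k ∈ m.support, j ≤ k
      · rw [rep_swap b h hji]; abel
      obtain ⟨v, hv, hmin, hvj⟩ := exists_min h
      have hdeg := degree_sub_single_lt hv
      have hle : Finsupp.single v 1 ≤ m := by
        rw [Finsupp.single_le_iff]
        exact Nat.one_le_iff_ne_zero.2 (Finsupp.mem_support_iff.1 hv)
      obtain ⟨q, rfl⟩ := exists_add_of_le hle
      rw [add_tsub_cancel_left] at hdeg
      have hq : ∀ k ∈ q.support, v ≤ k := fun k hk => hmin k (by
        simp only [Finsupp.mem_support_iff, Finsupp.add_apply] at hk ⊢; omega)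
      have hqn : monomial q (1 : K) ∈ lowDeg K I n := monomial_mem_lowDeg (by omega)
      rw [← rep_of_le b hq]
      -- `b t • z_q` is `X t * z_q`, to which `rep_swap` applies because `v` is still the least
      -- index, plus a remainder of lower degree, to which the induction hypothesis applies.
      have h2 : ∀ s t : I, v < s → v < t →
          rep b (b s) (rep b (b v) (rep b (b t) (monomial q 1))) =
            rep b (b v) (rep b (b s) (rep b (b t) (monomial q 1))) +
              rep b ⁅b s, b v⁆ (rep b (b t) (monomial q 1)) := by
        intro s t hs ht
        have hw := rep_sub_mem b t hqn
        set w := rep b (b t) (monomial q 1) - X t * monomial q 1 with hw_def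
        have ht' : rep b (b t) (monomial q 1) =
            monomial (Finsupp.single t 1 + q) 1 + w := by
          rw [hw_def, X_mul_monomial]; abel
        have hmin' : ∀ k ∈ (Finsupp.single t 1 + q).support, v ≤ k := by
          intro k hk
          rcases Finset.mem_union.1 (Finsupp.support_add hk) with hk | hk
          · exact (Finset.mem_singleton.1 (Finsupp.support_single_subset hk)).ge.trans' ht.le
          · exact hq k hk
        rw [ht']
        simp only [map_add]
        rw [rep_swap b hmin' hs, ih w hw]
        abel
      have hvi := hvj.trans hji
      have e1 := ih _ hqn (b j) (b v)
      have e2 := ih _ hqn (b i) (b v)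
      have e3 := ih _ hqn (b i) ⁅b j, b v⁆
      have e4 := ih _ hqn (b j) ⁅b i, b v⁆
      have e5 := ih _ hqn (b i) (b j)
      have e6 := ih _ hqn ⁅b i, b j⁆ (b v)
      have f1 : rep b (b j) (rep b (b v) (monomial q 1)) =
          rep b (b v) (rep b (b j) (monomial q 1)) + rep b ⁅b j, b v⁆ (monomial q 1) := by
        rw [e1]; abel
      have f2 : rep b (b i) (rep b (b v) (monomial q 1)) =
          rep b (b v) (rep b (b i) (monomial q 1)) + rep b ⁅b i, b v⁆ (monomial q 1) := by
        rw [e2]; abel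
      have jac : rep b ⁅⁅b i, b j⁆, b v⁆ (monomial q 1) =
          rep b ⁅b i, ⁅b j, b v⁆⁆ (monomial q 1) - rep b ⁅b j, ⁅b i, b v⁆⁆ (monomial q 1) := by
        rw [lie_lie, map_sub, LinearMap.sub_apply]
      have e5' := congrArg (rep b (b v)) e5
      rw [map_sub] at e5'
      rw [f1, f2, map_add, map_add, h2 i j hvi hvj, h2 j i hvj hvi]
      rw [← sub_eq_zero] at e3 e4 e5' e6 jac ⊢
      linear_combination e3 - e4 - e6 + e5' + jac
    intro f hf x y
    have := map_mem_of_lowDeg (rep b ⁅x, y⁆ - (rep b x * rep b y - rep b y * rep b x)) ⊥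
      (fun m hm => by simp [key m hm x y]) hf
    simpa [sub_eq_zero] using this

attribute [local instance] LieRing.ofAssociativeRing

/-- `rep` as a Lie algebra representation. -/
noncomputable def repLie : L →ₗ⁅K⁆ Module.End K (MvPolynomial I K) :=
  { rep b with
    map_lie' := by
      intro x y
      refine LinearMap.ext fun f => ?_
      exact rep_lie_low b _ f (mem_lowDeg_totalDegree f) x y }

end Action
/-! ### Ordered words and degrees in the enveloping algebra -/

section Ordered

attribute [local instance] LieRing.ofAssociativeRing

variable {K L I : Type*} [Field K] [LieRing L] [LieAlgebra K L]
  (b : Module.Basis I K L)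

/-- The product in `U(L)` of the basis vectors indexed by the entries of a list. -/
noncomputable def word (l : List I) : UniversalEnvelopingAlgebra K L :=
  (l.map fun i => UniversalEnvelopingAlgebra.ι K (b i)).prod

/-- The standard filtration of `U(L)`: the span of the words with fewer than `n` letters. -/
noncomputable def filt (n : ℕ) : Submodule K (UniversalEnvelopingAlgebra K L) :=
  Submodule.span K (word b '' {l : List I | l.length < n})

theorem word_cons (i : I) (l : List I) :
    word b (i :: l) = UniversalEnvelopingAlgebra.ι K (b i) * word b l := by
  simp only [word, List.map_cons, List.prod_cons]

theorem word_mem_filt {l : List I} {n : ℕ} (h : l.length < n) : word b l ∈ filt b n :=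
  Submodule.subset_span ⟨l, h, rfl⟩

theorem ι_mul_mem_filt (x : L) {n : ℕ} {u : UniversalEnvelopingAlgebra K L} (hu : u ∈ filt b n) :
    UniversalEnvelopingAlgebra.ι K x * u ∈ filt b (n + 1) := by
  have hx : x ∈ Submodule.span K (Set.range b) := b.mem_span x
  induction hx using Submodule.span_induction with
  | zero => simp
  | add x y _ _ hx hy => rw [map_add, add_mul]; exact Submodule.add_mem _ hx hy
  | smul a x _ hx => rw [map_smul, smul_mul_assoc]; exact Submodule.smul_mem _ _ hx
  | mem x hx =>
    obtain ⟨i, rfl⟩ := hx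
    induction hu using Submodule.span_induction with
    | zero => simp
    | add x y _ _ hx hy => rw [mul_add]; exact Submodule.add_mem _ hx hy
    | smul a x _ hx => rw [mul_smul_comm]; exact Submodule.smul_mem _ _ hx
    | mem u hu =>
      obtain ⟨l, hl, rfl⟩ := hu
      rw [← word_cons]
      exact word_mem_filt b (Nat.succ_lt_succ hl)

/-- Permuting the letters of a word changes it by a combination of shorter words. -/
theorem word_sub_mem_of_perm {l l' : List I} (h : l.Perm l') :
    word b l - word b l' ∈ filt b l.length := by
  induction h with
  | nil => rw [sub_self]; exact Submodule.zero_mem _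
  | cons i _ ih =>
    rw [word_cons, word_cons, ← mul_sub]
    exact ι_mul_mem_filt b _ ih
  | swap i j l =>
    have : word b (j :: i :: l) - word b (i :: j :: l) =
        UniversalEnvelopingAlgebra.ι K ⁅b j, b i⁆ * word b l := by
      simp only [word_cons, LieHom.map_lie, LieRing.of_associative_ring_bracket, sub_mul, mul_assoc]
    rw [this]
    exact ι_mul_mem_filt b _ (word_mem_filt b (Nat.lt_succ_self _))
  | trans h₁ _ ih₁ ih₂ =>
    rw [← h₁.length_eq] at ih₂
    simpa using Submodule.add_mem _ ih₁ ih₂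

variable [LinearOrder I]

/-- The linear map from polynomials to `U(L)` sending a monomial to its ordered word. -/
noncomputable def ord : MvPolynomial I K →ₗ[K] UniversalEnvelopingAlgebra K L :=
  (basisMonomials I K).constr K fun m => word b (Finsupp.toMultiset m).sort

theorem ord_monomial (m : I →₀ ℕ) :
    ord b (monomial m 1) = word b (Finsupp.toMultiset m).sort := by
  have h : monomial m (1 : K) = basisMonomials I K m := by rw [coe_basisMonomials]
  rw [ord, h, Module.Basis.constr_basis]

theorem ord_C (a : K) : ord b (C a) = algebraMap K _ a := by
  have : (C a : MvPolynomial I K) = a • monomial 0 1 := by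
    rw [smul_monomial, smul_eq_mul, mul_one]; rfl
  rw [this, map_smul, ord_monomial]
  simp [word, Algebra.algebraMap_eq_smul_one]

theorem filt_le_range_ord (n : ℕ) : filt b n ≤ LinearMap.range (ord b) := by
  induction n using Nat.strong_induction_on with
  | _ n ih =>
  refine Submodule.span_le.2 ?_
  rintro _ ⟨l, hl, rfl⟩
  have hperm : l.Perm (l : Multiset I).sort := by
    rw [← Multiset.coe_eq_coe, Multiset.sort_eq]
  have h1 := ih _ hl (word_sub_mem_of_perm b hperm)
  have h2 : word b (l : Multiset I).sort ∈ LinearMap.range (ord b) :=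
    ⟨monomial (Multiset.toFinsupp (l : Multiset I)) 1, by
      rw [ord_monomial, Multiset.toFinsupp_toMultiset]⟩
  simpa using Submodule.add_mem _ h1 h2

/-- The spanning half of the Poincaré–Birkhoff–Witt theorem. -/
theorem ord_surjective : Function.Surjective (ord b) := by
  have hι : ∀ (x : L), ∀ u ∈ LinearMap.range (ord b),
      UniversalEnvelopingAlgebra.ι K x * u ∈ LinearMap.range (ord b) := by
    rintro x _ ⟨f, rfl⟩
    refine map_mem_of_lowDeg (LinearMap.mulLeft K (UniversalEnvelopingAlgebra.ι K x) ∘ₗ ord b) _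
      (fun m _ => ?_) (mem_lowDeg_totalDegree f)
    rw [LinearMap.comp_apply, ord_monomial, LinearMap.mulLeft_apply]
    exact filt_le_range_ord b _ (ι_mul_mem_filt b x (word_mem_filt b (Nat.lt_succ_self _)))
  have hT : ∀ t : TensorAlgebra K L, ∀ u ∈ LinearMap.range (ord b),
      UniversalEnvelopingAlgebra.mkAlgHom K L t * u ∈ LinearMap.range (ord b) := by
    intro t
    induction t using TensorAlgebra.induction with
    | algebraMap r =>
      intro u hu
      rw [AlgHom.commutes, ← Algebra.smul_def]
      exact Submodule.smul_mem _ _ hu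
    | ι x => exact hι x
    | mul s t hs ht =>
      intro u hu
      rw [map_mul, mul_assoc]
      exact hs _ (ht _ hu)
    | add s t hs ht =>
      intro u hu
      rw [map_add, add_mul]
      exact Submodule.add_mem _ (hs _ hu) (ht _ hu)
  intro u
  obtain ⟨t, rfl⟩ : ∃ t, UniversalEnvelopingAlgebra.mkAlgHom K L t = u :=
    RingCon.mkₐ_surjective _ u
  have h1 : (1 : UniversalEnvelopingAlgebra K L) ∈ LinearMap.range (ord b) :=
    ⟨C 1, by rw [ord_C, map_one]⟩
  simpa using hT t 1 h1

/-- The action of `U(L)` on polynomials extending `repLie`. -/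
noncomputable def repU : UniversalEnvelopingAlgebra K L →ₐ[K] Module.End K (MvPolynomial I K) :=
  UniversalEnvelopingAlgebra.lift K (repLie b)

theorem repU_ι (x : L) : repU b (UniversalEnvelopingAlgebra.ι K x) = rep b x :=
  UniversalEnvelopingAlgebra.lift_ι_apply K (repLie b) x

theorem repU_word_cons (i : I) (l : List I) (f : MvPolynomial I K) :
    repU b (word b (i :: l)) f = rep b (b i) (repU b (word b l) f) := by
  rw [word_cons, map_mul, repU_ι]; rfl

theorem repU_word_one {l : List I} (h : l.Pairwise (· ≤ ·)) :
    repU b (word b l) 1 = monomial (Multiset.toFinsupp (l : Multiset I)) 1 := by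
  induction l with
  | nil => simp [word]
  | cons i l ih =>
    rw [List.pairwise_cons] at h
    rw [repU_word_cons, ih h.2, rep_of_le, ← Multiset.cons_coe, ← Multiset.singleton_add, map_add,
      Multiset.toFinsupp_singleton]
    intro k hk
    exact h.1 k (by simpa using hk)

/-- The independence half of the Poincaré–Birkhoff–Witt theorem: `ord` has a left inverse. -/
theorem repU_ord_one (p : MvPolynomial I K) : repU b (ord b p) 1 = p := by
  have := map_mem_of_lowDeg
    (LinearMap.applyₗ (1 : MvPolynomial I K) ∘ₗ (repU b).toLinearMap ∘ₗ ord b - LinearMap.id) ⊥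
    (fun m _ => by
      simp only [LinearMap.sub_apply, LinearMap.comp_apply, LinearMap.id_apply, ord_monomial,
        LinearMap.applyₗ_apply_apply, AlgHom.toLinearMap_apply]
      rw [repU_word_one b (Multiset.pairwise_sort _ _), Multiset.sort_eq,
        Finsupp.toMultiset_toFinsupp, sub_self]
      exact Submodule.zero_mem _) (mem_lowDeg_totalDegree p)
  simpa [sub_eq_zero] using this

/-- A word acts as the corresponding monomial up to terms of lower degree. The bound on
the degree of the product is carried along for the induction. -/
theorem repU_word_sub_mem (l : List I) {n : ℕ} {f : MvPolynomial I K}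
    (hf : f ∈ lowDeg K I (n + 1)) :
    repU b (word b l) f - (l.map X).prod * f ∈ lowDeg K I (l.length + n) ∧
      (l.map X).prod * f ∈ lowDeg K I (l.length + n + 1) := by
  induction l with
  | nil => simpa [word] using hf
  | cons i l ih =>
    obtain ⟨h1, h2⟩ := ih
    have hl : (i :: l).length + n = l.length + n + 1 := by rw [List.length_cons]; omega
    rw [repU_word_cons, List.map_cons, List.prod_cons, mul_assoc, hl]
    refine ⟨?_, X_mul_mem_lowDeg i h2⟩
    have h3 := rep_sub_mem b i h1
    have h4 := rep_sub_mem b i h2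
    have h5 := X_mul_mem_lowDeg i h1
    have := Submodule.add_mem _ (Submodule.add_mem _ (lowDeg_mono (Nat.le_succ _) h3) h4) h5
    convert this using 1
    rw [map_sub]; ring

/-- `ord p` acts as multiplication by `p` up to terms of lower degree. -/
theorem repU_ord_sub_mem {d n : ℕ} {p f : MvPolynomial I K}
    (hp : p ∈ lowDeg K I (d + 1)) (hf : f ∈ lowDeg K I (n + 1)) :
    repU b (ord b p) f - p * f ∈ lowDeg K I (d + n) := by
  refine map_mem_of_lowDeg (LinearMap.applyₗ f ∘ₗ (repU b).toLinearMap ∘ₗ ord b -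
    LinearMap.mulRight K f) _ (fun m hm => ?_) hp
  simp only [LinearMap.sub_apply, LinearMap.comp_apply, ord_monomial,
    LinearMap.applyₗ_apply_apply, AlgHom.toLinearMap_apply, LinearMap.mulRight_apply]
  have h := (repU_word_sub_mem b (Finsupp.toMultiset m).sort hf).1
  have hX : (((Finsupp.toMultiset m).sort).map (X : I → MvPolynomial I K)).prod =
      monomial m 1 := by
    rw [← Multiset.prod_coe, ← Multiset.map_coe, Multiset.sort_eq, Finsupp.toMultiset_map,
      Finsupp.prod_toMultiset, Finsupp.prod_mapDomain_index (by simp) (by simp [pow_add]),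
      monomial_eq, C_1, one_mul]
  rw [hX, Multiset.length_sort, length_toMultiset] at h
  exact lowDeg_mono (by omega) h

theorem repU_mul_ord_one (u : UniversalEnvelopingAlgebra K L) (r : MvPolynomial I K) :
    repU b (u * ord b r) 1 = repU b u r := by
  rw [map_mul, Module.End.mul_apply, repU_ord_one]

theorem repU_ι_one (i : I) : repU b (UniversalEnvelopingAlgebra.ι K (b i)) 1 = X i := by
  have h : (1 : MvPolynomial I K) = monomial 0 1 := rfl
  rw [repU_ι, h, rep_of_le b (by simp), add_zero]; rfl

/-- A factorization of a basis vector in `U(L)` has total degree at most one: otherwise `p * r`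
would agree with `X i`, hence with zero, in its top degree. -/
theorem totalDegree_le_one {p r : MvPolynomial I K} {i : I}
    (h : UniversalEnvelopingAlgebra.ι K (b i) = ord b p * ord b r) :
    p.totalDegree + r.totalDegree ≤ 1 := by
  have h1 : repU b (ord b p) r = X i := by rw [← repU_mul_ord_one, ← h, repU_ι_one]
  have hp : p ≠ 0 := by
    rintro rfl
    exact X_ne_zero i (by rw [← h1]; simp)
  have hr : r ≠ 0 := by
    rintro rfl
    exact X_ne_zero i (by rw [← h1]; simp)
  by_contra hlt
  have h2 := repU_ord_sub_mem b (mem_lowDeg_totalDegree p) (mem_lowDeg_totalDegree r)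
  rw [h1] at h2
  have h3 : (X i : MvPolynomial I K) ∈ lowDeg K I (p.totalDegree + r.totalDegree) :=
    lowDeg_mono (by rw [totalDegree_X]; omega) (mem_lowDeg_totalDegree _)
  have h4 := Submodule.sub_mem _ h3 h2
  rw [sub_sub_cancel] at h4
  obtain ⟨k, hk⟩ : ∃ k, p.totalDegree + r.totalDegree = k + 1 := ⟨_, (Nat.succ_pred (by omega)).symm⟩
  rw [hk] at h4
  have h5 := totalDegree_lt_of_mem_lowDeg h4
  rw [totalDegree_mul_of_isDomain hp hr] at h5
  omega

/-- If the augmentation ideal is generated by `ord r`, then every `X i` is a scalar multiple of `r`,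
so there is at most one index. -/
theorem subsingleton_of_isPrincipalIdealRing (b : Module.Basis I K L)
    (h : IsPrincipalIdealRing (UniversalEnvelopingAlgebra K L)) : Subsingleton I := by
  -- `ε` is the augmentation, the extension of the zero map `L → K`.
  let ε : UniversalEnvelopingAlgebra K L →ₐ[K] K := UniversalEnvelopingAlgebra.lift K 0
  have hε : ∀ x : L, ε (UniversalEnvelopingAlgebra.ι K x) = 0 := fun x =>
    UniversalEnvelopingAlgebra.lift_ι_apply K (0 : L →ₗ⁅K⁆ K) x
  obtain ⟨c, hc⟩ := (h.principal (RingHom.ker ε)).principal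
  obtain ⟨r, rfl⟩ := ord_surjective b c
  have hdiv : ∀ i, ∃ p, ord b p * ord b r = UniversalEnvelopingAlgebra.ι K (b i) := by
    intro i
    have hi : UniversalEnvelopingAlgebra.ι K (b i) ∈ RingHom.ker ε := hε _
    rw [hc] at hi
    obtain ⟨u, hu⟩ := Submodule.mem_span_singleton.1 hi
    obtain ⟨p, rfl⟩ := ord_surjective b u
    exact ⟨p, hu⟩
  have hX : ∀ i, r.totalDegree ≠ 0 ∧ ∃ a : K, C a * r = X i := by
    intro i
    obtain ⟨p, hp⟩ := hdiv i
    have hle := totalDegree_le_one b hp.symm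
    have hr : r.totalDegree ≠ 0 := by
      intro h0
      rw [totalDegree_eq_zero_iff_eq_C] at h0
      have hcε : ε (ord b r) = 0 := by
        have : ord b r ∈ RingHom.ker ε := by rw [hc]; exact Submodule.mem_span_singleton_self _
        exact this
      rw [h0, ord_C, AlgHom.commutes] at hcε
      have hr0 : r = 0 := by
        rw [h0, show coeff 0 r = 0 from hcε, C_0]
      have hι := repU_ι_one b i
      rw [← hp, hr0] at hι
      exact X_ne_zero (R := K) i (by rw [← hι]; simp)
    refine ⟨hr, coeff 0 p, ?_⟩
    have hp0 := totalDegree_eq_zero_iff_eq_C.1 (show p.totalDegree = 0 by omega)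
    rw [← repU_ι_one b i, ← hp, repU_mul_ord_one]
    conv_rhs => rw [hp0]
    rw [ord_C, AlgHom.commutes, Module.algebraMap_end_apply, smul_eq_C_mul]
  refine ⟨fun i j => ?_⟩
  by_contra hij
  obtain ⟨-, a, ha⟩ := hX i
  obtain ⟨-, a', ha'⟩ := hX j
  have hcomm : C a' * (X i : MvPolynomial I K) = C a * X j := by rw [← ha, ← ha']; ring
  have h0 : a = 0 := by
    have := congrArg (coeff (Finsupp.single j 1)) hcomm
    rw [coeff_C_mul, coeff_C_mul, coeff_X, coeff_X, if_neg, if_pos rfl] at this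
    · simpa using this.symm
    · intro h; exact hij (Finsupp.single_left_injective one_ne_zero h)
  rw [h0, C_0, zero_mul] at ha
  exact X_ne_zero i ha.symm

end Ordered

end PBW

/-- Let `L` be a Lie algebra over a field `K`. If the universal enveloping algebra
`U(L)` is a principal ideal ring, then `L` is abelian. -/
theorem isLieAbelian_of_universalEnvelopingAlgebra_isPrincipalIdealRing
    (K L : Type*) [Field K] [LieRing L] [LieAlgebra K L]
    (h : IsPrincipalIdealRing (UniversalEnvelopingAlgebra K L)) :
    IsLieAbelian L := by
  let b := Module.Free.chooseBasis K L
  let _ : LinearOrder (Module.Free.ChooseBasisIndex K L) := WellOrderingRel.isWellOrder.linearOrder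
  have hI := PBW.subsingleton_of_isPrincipalIdealRing b h
  have had : (LieModule.toEnd K L L : L →ₗ[K] Module.End K L) = 0 :=
    b.ext fun i => b.ext fun j => by
      rw [Subsingleton.elim j i]
      simp
  exact ⟨fun x y => LinearMap.congr_fun (LinearMap.congr_fun had x) y⟩
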